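/- Let T=(V,E) be a leafless directed tree with a root, let λ={λ_v}_{v∈V} be a sequence of positive real numbers, and let 1 < q < ∞. Assume the operator S* : L^q(T,λ) → L^q(T,λ), defined by (S* g)(u) = Σ_{v∈child(u)} g(v) λ_v/λ_u, is bounded. If there exists an increasing sequence of natural numbers {n_k} such that for all u ∈ V one has γ(u,n_k)^{−q} Σ_{v∈child^{n_k}(u)} λ_v^{1−q} → 0 as k → ∞, then S* is hypercyclic. -/

import Mathlib

open Filter

attribute [local instance] Classical.propDecidable
open scoped ENNReal

/-- A directed tree: a locally finite directed graph on a (countably infinite)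
vertex set with no directed circuits, whose underlying undirected graph is
connected, and in which every vertex has indegree at most one. -/
structure DirTree (V : Type) where
  E : V → V → Prop
  finIn : ∀ v : V, {u : V | E u v}.Finite
  finOut : ∀ v : V, {u : V | E v u}.Finite
  noCircuit : ∀ (n : ℕ) (c : Fin (n + 1) → V), Function.Injective c →
    (∀ i : Fin n, E (c i.castSucc) (c i.succ)) → ¬ E (c (Fin.last n)) (c 0)
  conn : (SimpleGraph.fromRel E).Connected
  indeg : ∀ ⦃u w v : V⦄, E u v → E w v → u = w

namespace DirTree

variable {V : Type} (T : DirTree V)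

/-- A root is a vertex of indegree zero. -/
def IsRoot (r : V) : Prop := ∀ u : V, ¬ T.E u r

/-- The set of children of a vertex. -/
def child (u : V) : Set V := {v : V | T.E u v}

/-- A leaf is a vertex of outdegree zero. -/
def IsLeaf (u : V) : Prop := ¬ (T.child u).Nonempty

/-- The (forward) shift `(S f)(v) = f (parent v)`, with `(S f)(root) = 0`. -/
noncomputable def shift (f : V → ℂ) (v : V) : ℂ :=
  if h : ∃ u : V, T.E u v then f h.choose else 0

/-- The backward shift `(B f)(u) = ∑_{v ∈ child u} f v`. -/
noncomputable def bwd (f : V → ℂ) (u : V) : ℂ :=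
  ∑' v : T.child u, f v.1

/-- The operator `(S* g)(u) = ∑_{v ∈ child u} g v · λ_v / λ_u`. -/
noncomputable def sstar (lam : V → ℝ) (g : V → ℂ) (u : V) : ℂ :=
  ∑' v : T.child u, g v.1 * ((lam v.1 / lam u : ℝ) : ℂ)

/-- `childN n u` is the set of vertices `v` with `parentⁿ v = u`. -/
def childN (T : DirTree V) : ℕ → V → Set V
  | 0, u => {u}
  | n + 1, u => {w : V | ∃ v ∈ T.child u, w ∈ childN T n v}

/-- `γ(u,n)`, the cardinality of `childN n u`. -/
noncomputable def gam (u : V) (n : ℕ) : ℕ := (T.childN n u).ncard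

/-- The `n`-th ancestor `parentⁿ u` of `u` (junk value `u` if it does not exist). -/
noncomputable def anc (u : V) (n : ℕ) : V :=
  if h : ∃ w : V, u ∈ T.childN n w then h.choose else u

/-- A leafless directed tree has a free end if some vertex is such that all of
its descendants have outdegree one. -/
def FreeEnd : Prop :=
  ∃ w : V, ∀ n : ℕ, 0 < n → ∀ v ∈ T.childN n w, (T.child v).ncard = 1

end DirTree

/-- Membership in the weighted space `L^p(T,λ)`. -/
def MemLp' {V : Type} (lam : V → ℝ) (p : ℝ) (f : V → ℂ) : Prop :=
  Summable (fun v => ‖f v‖ ^ p * lam v)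

/-- The norm of the weighted space `L^p(T,λ)`. -/
noncomputable def pNorm {V : Type} (lam : V → ℝ) (p : ℝ) (f : V → ℂ) : ℝ :=
  (∑' v, ‖f v‖ ^ p * lam v) ^ (1 / p)

/-- Boundedness of an operator on `L^p(T,λ)`. -/
def BoundedOn {V : Type} (lam : V → ℝ) (p : ℝ) (A : (V → ℂ) → (V → ℂ)) : Prop :=
  ∃ C : ℝ, 0 ≤ C ∧ ∀ f : V → ℂ, MemLp' lam p f →
    MemLp' lam p (A f) ∧ pNorm lam p (A f) ≤ C * pNorm lam p f

/-- Hypercyclicity of an operator on `L^p(T,λ)`: some `f ∈ L^p(T,λ)` has dense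
orbit `{Aⁿ f : n ∈ ℕ}`. -/
def Hypercyclic {V : Type} (lam : V → ℝ) (p : ℝ) (A : (V → ℂ) → (V → ℂ)) : Prop :=
  ∃ f : V → ℂ, MemLp' lam p f ∧ ∀ g : V → ℂ, MemLp' lam p g → ∀ ε : ℝ, 0 < ε →
    ∃ n : ℕ, MemLp' lam p (A^[n] f - g) ∧ pNorm lam p (A^[n] f - g) < ε

/-!
Write `e_v` for the indicator function of `v`. If `v ∈ childⁿ(u)`, then `(S*)ⁿ e_v` is the
multiple `λ_v / λ_u` of `e_u`. Since every vertex is reached from the root in finitely many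
steps, each `e_v` is annihilated by some power of `S*`. On the other hand, dividing the value
`1` equally among the points of `childⁿ(u)` gives a preimage of `e_u` under `(S*)ⁿ` whose norm has
`q`-th power `λ_u^q γ(u,n)^{-q} ∑ λ_v^{1-q}`, which tends to zero along `n_k`. As the functions
`e_v` span a dense subspace, the Baire category theorem yields a dense orbit.
-/

section Universality

variable {ι X Y : Type*} [TopologicalSpace X] [TopologicalSpace Y]

theorem exists_dense_range_of_forall_isOpen [Nonempty X] [BaireSpace X]
    [SecondCountableTopology Y] {f : ι → X → Y} (hf : ∀ i, Continuous (f i))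
    (htrans : ∀ U : Set X, IsOpen U → U.Nonempty → ∀ W : Set Y, IsOpen W → W.Nonempty →
      ∃ i, (U ∩ f i ⁻¹' W).Nonempty) :
    ∃ x, Dense (Set.range fun i => f i x) := by
  let B := TopologicalSpace.countableBasis Y
  have hB : TopologicalSpace.IsTopologicalBasis B :=
    TopologicalSpace.isBasis_countableBasis Y
  have hhit : Dense (⋂ W ∈ B, ⋃ i, f i ⁻¹' W) := by
    refine dense_biInter_of_isOpen
      (fun W hW => isOpen_iUnion fun i => (hB.isOpen hW).preimage (hf i))
      (TopologicalSpace.countable_countableBasis Y) fun W hW => ?_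
    rw [dense_iff_inter_open]
    intro U hU hUne
    obtain ⟨i, x, hxU, hxW⟩ :=
      htrans U hU hUne W (hB.isOpen hW) (TopologicalSpace.nonempty_of_mem_countableBasis hW)
    exact ⟨x, hxU, Set.mem_iUnion_of_mem i hxW⟩
  obtain ⟨x, hx⟩ := hhit.nonempty
  refine ⟨x, hB.dense_iff.2 fun W hW _ => ?_⟩
  obtain ⟨i, hi⟩ := Set.mem_iUnion.1 (Set.mem_iInter₂.1 hx W hW)
  exact ⟨f i x, hi, i, rfl⟩

variable {𝕜 : Type*} [Semiring 𝕜] [AddCommMonoid X] [Module 𝕜 X] [AddCommMonoid Y]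
  [Module 𝕜 Y] [ContinuousAdd Y] [ContinuousConstSMul 𝕜 Y] {l : Filter ι} {f : ι → X →L[𝕜] Y}

theorem tendsto_zero_of_mem_span {S : Set X}
    (hS : ∀ x ∈ S, Tendsto (fun i => f i x) l (nhds 0)) {x : X}
    (hx : x ∈ Submodule.span 𝕜 S) : Tendsto (fun i => f i x) l (nhds 0) := by
  induction hx using Submodule.span_induction with
  | mem x hx => exact hS x hx
  | zero => simpa only [map_zero] using tendsto_const_nhds
  | add x y _ _ hx hy => simpa only [map_add, add_zero] using hx.add hy
  | smul c x _ hx => simpa only [map_smul, smul_zero] using hx.const_smul c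

variable [ContinuousAdd X] [ContinuousConstSMul 𝕜 X]

theorem exists_tendsto_zero_of_mem_span {S : Set Y}
    (hS : ∀ y ∈ S, ∃ s : ι → X,
      Tendsto s l (nhds 0) ∧ Tendsto (fun i => f i (s i)) l (nhds y))
    {y : Y} (hy : y ∈ Submodule.span 𝕜 S) :
    ∃ s : ι → X, Tendsto s l (nhds 0) ∧ Tendsto (fun i => f i (s i)) l (nhds y) := by
  induction hy using Submodule.span_induction with
  | mem y hy => exact hS y hy
  | zero => exact ⟨0, tendsto_const_nhds, by simpa only [Pi.zero_apply, map_zero] using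
      tendsto_const_nhds⟩
  | add y z _ _ hy hz =>
    obtain ⟨s, hs, hfs⟩ := hy
    obtain ⟨t, ht, hft⟩ := hz
    exact ⟨fun i => s i + t i, by simpa only [add_zero] using hs.add ht,
      by simpa only [map_add] using hfs.add hft⟩
  | smul c y _ hy =>
    obtain ⟨s, hs, hfs⟩ := hy
    exact ⟨fun i => c • s i, by simpa only [smul_zero] using hs.const_smul c,
      by simpa only [map_smul] using hfs.const_smul c⟩

/- The Gethner–Shapiro form of the hypercyclicity criterion: if `x` and `y` lie in the two dense
subspaces, then `x + s i` tends to `x` while its image under `f i` tends to `y`. -/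
theorem exists_dense_range_of_dense_span [BaireSpace X] [SecondCountableTopology Y] [l.NeBot]
    {S : Set X} {S' : Set Y}
    (hS : Dense (Submodule.span 𝕜 S : Set X)) (hS' : Dense (Submodule.span 𝕜 S' : Set Y))
    (hzero : ∀ x ∈ S, Tendsto (fun i => f i x) l (nhds 0))
    (hpre : ∀ y ∈ S', ∃ s : ι → X,
      Tendsto s l (nhds 0) ∧ Tendsto (fun i => f i (s i)) l (nhds y)) :
    ∃ x, Dense (Set.range fun i => f i x) := by
  refine exists_dense_range_of_forall_isOpen (fun i => (f i).continuous)
    fun U hU hUne W hW hWne => ?_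
  obtain ⟨x, hxU, hx⟩ := hS.inter_open_nonempty U hU hUne
  obtain ⟨y, hyW, hy⟩ := hS'.inter_open_nonempty W hW hWne
  obtain ⟨s, hs, hfs⟩ := exists_tendsto_zero_of_mem_span hpre hy
  have hxs : Tendsto (fun i => x + s i) l (nhds x) := by
    simpa only [add_zero] using hs.const_add x
  have hfxs : Tendsto (fun i => f i (x + s i)) l (nhds y) := by
    simpa only [map_add, zero_add] using (tendsto_zero_of_mem_span hzero hx).add hfs
  obtain ⟨i, hi, hfi⟩ :=
    ((hxs.eventually_mem (hU.mem_nhds hxU)).and (hfxs.eventually_mem (hW.mem_nhds hyW))).exists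
  exact ⟨i, x + s i, hi, hfi⟩

end Universality

section SequenceSpace

variable {V 𝕜 : Type*} [NormedField 𝕜] {p : ℝ≥0∞} [Fact (1 ≤ p)]

theorem dense_span_range_single (hp : p ≠ ⊤) {c : V → 𝕜} (hc : ∀ v, c v ≠ 0) :
    Dense (Submodule.span 𝕜 (Set.range fun v => lp.single (E := fun _ : V => 𝕜) p v (c v)) :
      Set (lp (fun _ : V => 𝕜) p)) := by
  intro x
  refine mem_closure_of_tendsto (lp.hasSum_single hp x)
    (Eventually.of_forall fun s => Submodule.sum_mem _ fun v _ => ?_)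
  have hsingle : lp.single (E := fun _ : V => 𝕜) p v (x v) =
      (x v / c v) • lp.single (E := fun _ : V => 𝕜) p v (c v) := by
    rw [← lp.single_smul, smul_eq_mul, div_mul_cancel₀ _ (hc v)]
  rw [hsingle]
  exact Submodule.smul_mem _ _ (Submodule.subset_span ⟨v, rfl⟩)

theorem secondCountableTopology_lp [Countable V] [TopologicalSpace.SeparableSpace 𝕜]
    (hp : p ≠ ⊤) : SecondCountableTopology (lp (fun _ : V => 𝕜) p) := by
  have hspan := (Set.countable_range fun v => lp.single (E := fun _ : V => 𝕜) p v
    (1 : 𝕜)).isSeparable.span (R := 𝕜)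
  have huniv := hspan.closure
  rw [(dense_span_range_single hp fun _ => one_ne_zero).closure_eq,
    TopologicalSpace.isSeparable_univ_iff] at huniv
  exact UniformSpace.secondCountable_of_separable _

end SequenceSpace

section WeightedSpace

variable {V : Type} {lam : V → ℝ} {q : ℝ}

theorem memLp'_of_finite_support (hq : q ≠ 0) {f : V → ℂ} (hf : f.support.Finite) :
    MemLp' lam q f := by
  refine summable_of_hasFiniteSupport (hf.subset fun v hv hfv => hv ?_)
  simp only [hfv, norm_zero, Real.zero_rpow hq, zero_mul]

theorem pNorm_zero (hq : q ≠ 0) : pNorm lam q 0 = 0 := by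
  simp only [pNorm, Pi.zero_apply, norm_zero, Real.zero_rpow hq, zero_mul, tsum_zero,
    Real.zero_rpow (one_div_ne_zero hq)]

/-- The unweighted sequence space `ℓ^q` on `V`. -/
abbrev LittleLq (V : Type) (q : ℝ) : Type := lp (fun _ : V => ℂ) (ENNReal.ofReal q)

/-- Multiplication by `λ^{-1/q}`, mapping the unweighted sequence space `ℓ^q` isometrically onto
`L^q(T,λ)`; the completeness of `L^q(T,λ)` is accessed through it. -/
noncomputable def unweight (lam : V → ℝ) (q : ℝ) :
    LittleLq V q →ₗ[ℂ] (V → ℂ) where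
  toFun x v := ((lam v ^ (-(1 / q)) : ℝ) : ℂ) * x v
  map_add' x y := by
    ext v
    simp only [lp.coeFn_add, Pi.add_apply, mul_add]
  map_smul' c x := by
    ext v
    simp only [lp.coeFn_smul, Pi.smul_apply, smul_eq_mul, RingHom.id_apply, mul_left_comm]

theorem unweight_apply (x : LittleLq V q) (v : V) :
    unweight lam q x v = ((lam v ^ (-(1 / q)) : ℝ) : ℂ) * x v := rfl

theorem unweight_injective (hlam : ∀ v, 0 < lam v) :
    Function.Injective (unweight lam q) := by
  intro x y hxy
  ext v
  have hv : ((lam v ^ (-(1 / q)) : ℝ) : ℂ) ≠ 0 :=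
    Complex.ofReal_ne_zero.2 (Real.rpow_pos_of_pos (hlam v) _).ne'
  exact mul_left_cancel₀ hv (congrFun hxy v)

theorem norm_rpow_neg_mul_rpow_mul {a : ℝ} (ha : 0 < a) (hq : q ≠ 0) (z : ℂ) :
    ‖((a ^ (-(1 / q)) : ℝ) : ℂ) * z‖ ^ q * a = ‖z‖ ^ q := by
  have ha' : (a ^ (-(1 / q))) ^ q = a⁻¹ := by
    rw [← Real.rpow_mul ha.le, neg_mul, one_div_mul_cancel hq, Real.rpow_neg_one]
  have hpos : 0 ≤ a ^ (-(1 / q)) := Real.rpow_nonneg ha.le _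
  rw [norm_mul, Complex.norm_real, Real.norm_of_nonneg hpos,
    Real.mul_rpow hpos (norm_nonneg z), ha', mul_right_comm, inv_mul_cancel₀ ha.ne', one_mul]

theorem norm_unweight_rpow_mul (hlam : ∀ v, 0 < lam v) (hq : q ≠ 0)
    (x : LittleLq V q) (v : V) :
    ‖unweight lam q x v‖ ^ q * lam v = ‖x v‖ ^ q :=
  norm_rpow_neg_mul_rpow_mul (hlam v) hq (x v)

theorem memLp'_unweight (hlam : ∀ v, 0 < lam v) (hq : 0 < q)
    (x : LittleLq V q) : MemLp' lam q (unweight lam q x) := by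
  have hq' : (ENNReal.ofReal q).toReal = q := ENNReal.toReal_ofReal hq.le
  simpa only [MemLp', norm_unweight_rpow_mul hlam hq.ne', hq'] using
    (lp.memℓp x).summable (hq'.symm ▸ hq)

theorem pNorm_unweight (hlam : ∀ v, 0 < lam v) (hq : 0 < q)
    (x : LittleLq V q) : pNorm lam q (unweight lam q x) = ‖x‖ := by
  have hq' : (ENNReal.ofReal q).toReal = q := ENNReal.toReal_ofReal hq.le
  simp only [lp.norm_eq_tsum_rpow (hq'.symm ▸ hq), pNorm, norm_unweight_rpow_mul hlam hq.ne', hq']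

theorem MemLp'.exists_unweight_eq (hlam : ∀ v, 0 < lam v) (hq : 0 < q) {f : V → ℂ}
    (hf : MemLp' lam q f) : ∃ x, unweight lam q x = f := by
  let x : V → ℂ := fun v => ((lam v ^ (1 / q) : ℝ) : ℂ) * f v
  have hx : ∀ v, ((lam v ^ (-(1 / q)) : ℝ) : ℂ) * x v = f v := fun v => by
    rw [← mul_assoc, ← Complex.ofReal_mul, ← Real.rpow_add (hlam v), neg_add_cancel,
      Real.rpow_zero, Complex.ofReal_one, one_mul]
  have hxq : Memℓp x (ENNReal.ofReal q) := by
    apply memℓp_gen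
    simpa only [MemLp', ← hx, norm_rpow_neg_mul_rpow_mul (hlam _) hq.ne',
      ENNReal.toReal_ofReal hq.le] using hf
  exact ⟨⟨x, hxq⟩, funext hx⟩

theorem unweight_single (hlam : ∀ v, 0 < lam v) (v : V) :
    unweight lam q (lp.single _ v ((lam v ^ (1 / q) : ℝ) : ℂ)) = Pi.single v 1 := by
  ext u
  rcases eq_or_ne u v with rfl | huv
  · rw [unweight_apply, lp.single_apply_self, Pi.single_eq_same, ← Complex.ofReal_mul,
      ← Real.rpow_add (hlam u), neg_add_cancel, Real.rpow_zero, Complex.ofReal_one]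
  · rw [unweight_apply, lp.single_apply_ne _ _ _ huv, mul_zero, Pi.single_eq_of_ne huv]

theorem pos_of_fact_one_le_ofReal (q : ℝ) [hq : Fact (1 ≤ ENNReal.ofReal q)] : 0 < q :=
  one_pos.trans_le (ENNReal.one_le_ofReal.1 hq.out)

variable [Fact (1 ≤ ENNReal.ofReal q)]

theorem tendsto_zero_iff_pNorm_unweight (hlam : ∀ v, 0 < lam v) {ι : Type*} {l : Filter ι}
    {x : ι → LittleLq V q} :
    Tendsto x l (nhds 0) ↔ Tendsto (fun i => pNorm lam q (unweight lam q (x i))) l (nhds 0) := by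
  simp only [pNorm_unweight hlam (pos_of_fact_one_le_ofReal q),
    tendsto_zero_iff_norm_tendsto_zero (f := x)]

theorem BoundedOn.exists_semiconj_unweight (hlam : ∀ v, 0 < lam v)
    {A : (V → ℂ) →ₗ[ℂ] (V → ℂ)} (hA : BoundedOn lam q A) :
    ∃ B : LittleLq V q →L[ℂ] LittleLq V q, Function.Semiconj (unweight lam q) B A := by
  have hq := pos_of_fact_one_le_ofReal q
  obtain ⟨C, -, hC⟩ := hA
  choose B hB using fun x =>
    (hC _ (memLp'_unweight hlam hq x)).1.exists_unweight_eq hlam hq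
  let B' : LittleLq V q →ₗ[ℂ] LittleLq V q :=
    { toFun := B
      map_add' := fun x y => unweight_injective hlam (by simp only [hB, map_add])
      map_smul' := fun c x => unweight_injective hlam (by
        simp only [hB, map_smul, RingHom.id_apply]) }
  have hB' : ∀ x, ‖B' x‖ ≤ C * ‖x‖ := fun x => by
    calc ‖B' x‖ = pNorm lam q (A (unweight lam q x)) := by
          rw [← hB, pNorm_unweight hlam hq]; rfl
      _ ≤ C * pNorm lam q (unweight lam q x) := (hC _ (memLp'_unweight hlam hq x)).2
      _ = C * ‖x‖ := by rw [pNorm_unweight hlam hq]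
  exact ⟨B'.mkContinuous C hB', hB⟩

theorem hypercyclic_of_dense_orbit (hlam : ∀ v, 0 < lam v) {A : (V → ℂ) → (V → ℂ)}
    {B : LittleLq V q → LittleLq V q} (hB : Function.Semiconj (unweight lam q) B A)
    {x : LittleLq V q} (hx : Dense (Set.range fun n => B^[n] x)) :
    Hypercyclic lam q A := by
  have hq := pos_of_fact_one_le_ofReal q
  refine ⟨unweight lam q x, memLp'_unweight hlam hq x, fun g hg ε hε => ?_⟩
  obtain ⟨y, rfl⟩ := hg.exists_unweight_eq hlam hq
  obtain ⟨_, ⟨n, rfl⟩, hn⟩ := hx.exists_dist_lt y hε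
  rw [dist_comm, dist_eq_norm] at hn
  have hsub : A^[n] (unweight lam q x) - unweight lam q y = unweight lam q (B^[n] x - y) := by
    rw [map_sub, (hB.iterate_right n).eq]
  refine ⟨n, ?_⟩
  rw [hsub]
  exact ⟨memLp'_unweight hlam hq _, (pNorm_unweight hlam hq _).trans_lt hn⟩

theorem hypercyclic_of_tendsto_single [Countable V] {ι : Type*} {l : Filter ι} [l.NeBot]
    (hlam : ∀ v, 0 < lam v) {A : (V → ℂ) →ₗ[ℂ] (V → ℂ)}
    (hA : BoundedOn lam q A) (n : ι → ℕ)
    (hzero : ∀ v, Tendsto (fun i => pNorm lam q (A^[n i] (Pi.single v 1))) l (nhds 0))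
    (hpre : ∀ v, ∃ s : ι → V → ℂ, (∀ i, MemLp' lam q (s i)) ∧
      Tendsto (fun i => pNorm lam q (s i)) l (nhds 0) ∧ ∀ i, A^[n i] (s i) = Pi.single v 1) :
    Hypercyclic lam q A := by
  have : SecondCountableTopology (LittleLq V q) :=
    secondCountableTopology_lp ENNReal.ofReal_ne_top
  obtain ⟨B, hB⟩ := hA.exists_semiconj_unweight hlam
  have hBn : ∀ m x, unweight lam q ((B ^ m) x) = A^[m] (unweight lam q x) := fun m x => by
    rw [FunLike.coe_pow_eq_iterate]; exact hB.iterate_right m x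
  let e : V → LittleLq V q :=
    fun v => lp.single _ v ((lam v ^ (1 / q) : ℝ) : ℂ)
  have he : Dense (Submodule.span ℂ (Set.range e) : Set (LittleLq V q)) :=
    dense_span_range_single ENNReal.ofReal_ne_top fun v =>
      Complex.ofReal_ne_zero.2 (Real.rpow_pos_of_pos (hlam v) _).ne'
  obtain ⟨x, hx⟩ : ∃ x, Dense (Set.range fun i => (B ^ n i) x) := by
    refine exists_dense_range_of_dense_span (l := l) he he ?_ ?_
    · rintro _ ⟨v, rfl⟩
      rw [tendsto_zero_iff_pNorm_unweight hlam]
      simpa only [hBn, e, unweight_single hlam] using hzero v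
    · rintro _ ⟨v, rfl⟩
      obtain ⟨s, hs, hs0, hAs⟩ := hpre v
      choose t ht using fun i => (hs i).exists_unweight_eq hlam (pos_of_fact_one_le_ofReal q)
      have hBt : ∀ i, (B ^ n i) (t i) = e v := fun i =>
        unweight_injective hlam (by rw [hBn, ht, hAs, unweight_single hlam])
      refine ⟨t, (tendsto_zero_iff_pNorm_unweight hlam).2 ?_, ?_⟩
      · simpa only [ht] using hs0
      · simpa only [hBt] using tendsto_const_nhds
  refine hypercyclic_of_dense_orbit hlam hB (x := x) (hx.mono ?_)
  rintro _ ⟨i, rfl⟩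
  exact ⟨n i, congrFun (FunLike.coe_pow_eq_iterate B (n i)).symm x⟩

end WeightedSpace

namespace DirTree

variable {V : Type} (T : DirTree V)

theorem finite_childN (n : ℕ) (u : V) : (T.childN n u).Finite := by
  induction n generalizing u with
  | zero => exact Set.finite_singleton u
  | succ n ih =>
    have hunion : T.childN (n + 1) u = ⋃ v ∈ T.child u, T.childN n v := by
      ext w
      simp only [childN, Set.mem_ofPred_eq, Set.mem_iUnion, exists_prop]
    exact hunion ▸ (T.finOut u).biUnion fun v _ => ih v

theorem nonempty_childN (hleafless : ∀ u, ¬ T.IsLeaf u) (n : ℕ) (u : V) :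
    (T.childN n u).Nonempty := by
  induction n generalizing u with
  | zero => exact Set.singleton_nonempty u
  | succ n ih =>
    obtain ⟨v, hv⟩ := not_not.1 (hleafless u)
    obtain ⟨w, hw⟩ := ih v
    exact ⟨w, v, hv, hw⟩

theorem mem_childN_succ_iff_exists_parent {n : ℕ} {u w : V} :
    w ∈ T.childN (n + 1) u ↔ ∃ v ∈ T.childN n u, T.E v w := by
  induction n generalizing u with
  | zero => simp [childN, child]
  | succ n ih =>
    change (∃ x ∈ T.child u, w ∈ T.childN (n + 1) x) ↔
      ∃ v, (∃ x ∈ T.child u, v ∈ T.childN n x) ∧ T.E v w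
    simp only [ih]
    tauto

theorem exists_mem_childN_of_isRoot {r : V} (hr : T.IsRoot r) (v : V) :
    ∃ n, v ∈ T.childN n r := by
  have hreach := (SimpleGraph.reachable_iff_reflTransGen r v).1 (T.conn.preconnected r v)
  induction hreach with
  | refl => exact ⟨0, rfl⟩
  | @tail u v _ hadj ih =>
    obtain ⟨n, hn⟩ := ih
    rcases ((SimpleGraph.fromRel_adj _ _ _).1 hadj).2 with huv | hvu
    · exact ⟨n + 1, T.mem_childN_succ_iff_exists_parent.2 ⟨u, hn, huv⟩⟩
    · cases n with
      | zero =>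
        obtain rfl : u = r := hn
        exact absurd hvu (hr v)
      | succ n =>
        obtain ⟨w, hw, hwu⟩ := T.mem_childN_succ_iff_exists_parent.1 hn
        exact ⟨n, T.indeg hvu hwu ▸ hw⟩

/-- The operator `S*` as a linear map on all functions; the sums over `child u` are finite. -/
noncomputable def sstarLinearMap (lam : V → ℝ) : (V → ℂ) →ₗ[ℂ] (V → ℂ) where
  toFun := T.sstar lam
  map_add' f g := by
    ext u
    have : Finite (T.child u) := T.finOut u
    simp only [sstar, Pi.add_apply, add_mul]
    exact Summable.of_finite.tsum_add Summable.of_finite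
  map_smul' c f := by
    ext u
    simp only [sstar, Pi.smul_apply, smul_eq_mul, mul_assoc, tsum_mul_left, RingHom.id_apply]

theorem sstarLinearMap_single {lam : V → ℝ} {u v : V} (huv : T.E u v) :
    T.sstarLinearMap lam (Pi.single v 1) = ((lam v / lam u : ℝ) : ℂ) • Pi.single u 1 := by
  ext x
  change ∑' w : T.child x, _ = _
  rcases eq_or_ne x u with rfl | hx
  · rw [tsum_eq_single (⟨v, huv⟩ : T.child x) fun w hw => by
      rw [Pi.single_eq_of_ne (Subtype.coe_ne_coe.2 hw), zero_mul]]
    simp only [Pi.single_eq_same, Pi.smul_apply, smul_eq_mul, one_mul, mul_one]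
  · rw [Pi.smul_apply, Pi.single_eq_of_ne hx, smul_zero, ← tsum_zero]
    refine tsum_congr fun w => ?_
    have hwv : (w : V) ≠ v := fun hwv => hx (T.indeg w.2 (hwv ▸ huv))
    rw [Pi.single_eq_of_ne hwv, zero_mul]

theorem sstarLinearMap_single_of_isRoot {lam : V → ℝ} {r : V} (hr : T.IsRoot r) :
    T.sstarLinearMap lam (Pi.single r 1) = 0 := by
  ext x
  change ∑' w : T.child x, _ = _
  rw [Pi.zero_apply, ← tsum_zero]
  refine tsum_congr fun w => ?_
  have hwr : (w : V) ≠ r := fun hwr => hr x (hwr ▸ w.2)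
  rw [Pi.single_eq_of_ne hwr, zero_mul]

theorem sstarLinearMap_pow_single {lam : V → ℝ} (hlam : ∀ v, lam v ≠ 0) {n : ℕ} {u v : V}
    (hv : v ∈ T.childN n u) :
    (T.sstarLinearMap lam ^ n) (Pi.single v 1) =
      ((lam v / lam u : ℝ) : ℂ) • Pi.single u 1 := by
  induction n generalizing u with
  | zero =>
    obtain rfl : v = u := hv
    simp [hlam v]
  | succ n ih =>
    obtain ⟨x, hx, hv⟩ := hv
    rw [pow_succ', Module.End.mul_apply, ih hv, map_smul, T.sstarLinearMap_single hx, smul_smul,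
      ← Complex.ofReal_mul, div_mul_div_cancel₀ (hlam x)]

theorem eventually_sstarLinearMap_pow_single_eq_zero {lam : V → ℝ} (hlam : ∀ v, lam v ≠ 0)
    {r : V} (hr : T.IsRoot r) (v : V) :
    ∀ᶠ n in atTop, (T.sstarLinearMap lam ^ n) (Pi.single v 1) = 0 := by
  obtain ⟨d, hd⟩ := T.exists_mem_childN_of_isRoot hr v
  filter_upwards [eventually_ge_atTop (d + 1)] with n hn
  obtain ⟨m, rfl⟩ := Nat.exists_eq_add_of_le' hn
  rw [pow_add, pow_succ', Module.End.mul_apply, Module.End.mul_apply,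
    T.sstarLinearMap_pow_single hlam hd, map_smul, T.sstarLinearMap_single_of_isRoot hr,
    smul_zero, map_zero]

/-- The function `λ_u / (γ(u,n) λ_v)` of `v ∈ childⁿ(u)`, extended by zero: the preimage of the
indicator function of `u` under `(S*)ⁿ` to which all points of `childⁿ(u)` contribute equally. -/
noncomputable def evenPreimage (lam : V → ℝ) (n : ℕ) (u : V) : V → ℂ :=
  (T.childN n u).indicator fun v => ((lam u / (T.gam u n * lam v) : ℝ) : ℂ)

theorem memLp'_evenPreimage {lam : V → ℝ} {q : ℝ} (hq : q ≠ 0) (n : ℕ) (u : V) :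
    MemLp' lam q (T.evenPreimage lam n u) :=
  memLp'_of_finite_support hq ((T.finite_childN n u).subset Set.support_indicator_subset)

theorem evenPreimage_eq_sum (lam : V → ℝ) (n : ℕ) (u : V) :
    T.evenPreimage lam n u = ∑ v ∈ (T.finite_childN n u).toFinset,
      ((lam u / (T.gam u n * lam v) : ℝ) : ℂ) • Pi.single v 1 := by
  ext w
  simp [evenPreimage, Set.indicator_apply, Finset.sum_apply, Pi.single_apply]

theorem sstarLinearMap_pow_evenPreimage {lam : V → ℝ} (hlam : ∀ v, lam v ≠ 0) {n : ℕ} {u : V}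
    (hne : (T.childN n u).Nonempty) :
    (T.sstarLinearMap lam ^ n) (T.evenPreimage lam n u) = Pi.single u 1 := by
  have hfin := T.finite_childN n u
  have hgam : (T.gam u n : ℂ) ≠ 0 := Nat.cast_ne_zero.2 (hne.ncard_pos hfin).ne'
  have hterm : ∀ v ∈ hfin.toFinset,
      (T.sstarLinearMap lam ^ n) (((lam u / (T.gam u n * lam v) : ℝ) : ℂ) • Pi.single v 1) =
        (T.gam u n : ℂ)⁻¹ • Pi.single u 1 := fun v hv => by
    have hu : (lam u : ℂ) ≠ 0 := Complex.ofReal_ne_zero.2 (hlam u)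
    have hv' : (lam v : ℂ) ≠ 0 := Complex.ofReal_ne_zero.2 (hlam v)
    rw [map_smul, T.sstarLinearMap_pow_single hlam (hfin.mem_toFinset.1 hv), smul_smul]
    congr 1
    push_cast
    field_simp
  have hcard : hfin.toFinset.card = T.gam u n := (Set.ncard_eq_toFinset_card _ hfin).symm
  rw [evenPreimage_eq_sum, map_sum, Finset.sum_congr rfl hterm, Finset.sum_const, hcard,
    ← Nat.cast_smul_eq_nsmul ℂ, smul_inv_smul₀ hgam]

theorem pNorm_evenPreimage {lam : V → ℝ} (hlam : ∀ v, 0 < lam v) {q : ℝ} (hq : q ≠ 0)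
    (n : ℕ) (u : V) :
    pNorm lam q (T.evenPreimage lam n u) =
      (lam u ^ q * ((∑' v : T.childN n u, lam v ^ (1 - q)) / (T.gam u n : ℝ) ^ q)) ^ (1 / q) := by
  have hterm : ∀ v, ‖T.evenPreimage lam n u v‖ ^ q * lam v =
      (T.childN n u).indicator
        (fun v => lam u ^ q / (T.gam u n : ℝ) ^ q * lam v ^ (1 - q)) v := fun v => by
    by_cases hv : v ∈ T.childN n u
    · have hvpos := hlam v
      have hupos := hlam u
      rw [evenPreimage, Set.indicator_of_mem hv, Set.indicator_of_mem hv, Complex.norm_real,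
        Real.norm_of_nonneg (by positivity), Real.div_rpow hupos.le (by positivity),
        Real.mul_rpow (Nat.cast_nonneg _) hvpos.le, Real.rpow_sub hvpos, Real.rpow_one]
      ring
    · rw [evenPreimage, Set.indicator_of_notMem hv, Set.indicator_of_notMem hv, norm_zero,
        Real.zero_rpow hq, zero_mul]
  rw [pNorm, tsum_congr hterm, ← tsum_subtype, tsum_mul_left, div_mul_eq_mul_div, mul_div_assoc]

end DirTree

/-- For a leafless rooted directed tree, `1 < q < ∞`, and
bounded `S*` on `L^q(T,λ)`: if there is a strictly increasing sequence `n_k`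
with `γ(u,n_k)^{-q} ∑_{v ∈ childⁿᵏ(u)} λ_v^{1-q} → 0` for every `u`, then `S*`
is hypercyclic. -/
theorem stmt_18 {V : Type} [Countable V] [Infinite V] (T : DirTree V)
    (hleafless : ∀ u : V, ¬ T.IsLeaf u) (hroot : ∃ r : V, T.IsRoot r)
    (lam : V → ℝ) (hlam : ∀ v : V, 0 < lam v) (q : ℝ) (hq : 1 < q)
    (hb : BoundedOn lam q (T.sstar lam))
    (nk : ℕ → ℕ) (hnk : StrictMono nk)
    (hOmega : ∀ u : V,
      Tendsto (fun k : ℕ =>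
          (∑' v : T.childN (nk k) u, (lam v.1) ^ ((1 : ℝ) - q)) /
            ((T.gam u (nk k) : ℝ)) ^ q)
        atTop (nhds 0)) :
    Hypercyclic lam q (T.sstar lam) := by
  obtain ⟨r, hr⟩ := hroot
  have hlam0 : ∀ v, lam v ≠ 0 := fun v => (hlam v).ne'
  have hq0 : q ≠ 0 := (one_pos.trans hq).ne'
  have : Fact (1 ≤ ENNReal.ofReal q) := ⟨ENNReal.one_le_ofReal.2 hq.le⟩
  refine hypercyclic_of_tendsto_single (l := atTop) (A := T.sstarLinearMap lam) hlam hb nk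
    (fun v => tendsto_const_nhds.congr' ?_)
    fun u => ⟨fun k => T.evenPreimage lam (nk k) u, fun k => T.memLp'_evenPreimage hq0 _ u, ?_,
      fun k => ?_⟩
  · filter_upwards [hnk.tendsto_atTop.eventually
      (T.eventually_sstarLinearMap_pow_single_eq_zero hlam0 hr v)] with k hk
    rw [← Module.End.pow_apply, hk, pNorm_zero hq0]
  · have hlim := ((hOmega u).const_mul (lam u ^ q)).rpow_const (p := 1 / q) (Or.inr (by positivity))
    simpa only [T.pNorm_evenPreimage hlam hq0, mul_zero, Real.zero_rpow (one_div_ne_zero hq0)]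
      using hlim
  · rw [← Module.End.pow_apply]
    exact T.sstarLinearMap_pow_evenPreimage hlam0 (T.nonempty_childN hleafless (nk k) u)
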